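/- Up to projective equivalence there are exactly seven minimal 1-saturating sets of size 10 in PG(4,2): exactly one of them is a (complete) cap and exactly six are not caps. -/

import Mathlib

/-- Points of PG(n-1,2) are the nonzero vectors of `Fin n → ZMod 2`.
A set `S` of nonzero vectors is 1-saturating if every nonzero vector `x ∉ S`
is the sum of two distinct elements of `S`. -/
def Saturating {n : ℕ} (S : Set (Fin n → ZMod 2)) : Prop :=
  (∀ s ∈ S, s ≠ 0) ∧
    ∀ x : Fin n → ZMod 2, x ≠ 0 → x ∉ S →
      ∃ a ∈ S, ∃ b ∈ S, a ≠ b ∧ x = a + b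

/-- A minimal 1-saturating set: 1-saturating, and removing any point destroys saturation. -/
def MinSat {n : ℕ} (S : Set (Fin n → ZMod 2)) : Prop :=
  Saturating S ∧ ∀ s ∈ S, ¬ Saturating (S \ {s})

/-- A cap: a set of nonzero vectors no three pairwise distinct elements of which sum to zero. -/
def IsCap {n : ℕ} (S : Set (Fin n → ZMod 2)) : Prop :=
  (∀ s ∈ S, s ≠ 0) ∧
    ∀ a ∈ S, ∀ b ∈ S, ∀ c ∈ S, a ≠ b → a ≠ c → b ≠ c → a + b + c ≠ 0

/-- A complete cap: a cap that is 1-saturating. -/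
def CompleteCap {n : ℕ} (S : Set (Fin n → ZMod 2)) : Prop :=
  IsCap S ∧ Saturating S

/-- Projective equivalence: some element of GL(n, ZMod 2) maps `S` onto `T`. -/
def ProjEquiv {n : ℕ} (S T : Set (Fin n → ZMod 2)) : Prop :=
  ∃ g : Matrix.GeneralLinearGroup (Fin n) (ZMod 2),
    (fun x => Matrix.mulVec (g : Matrix (Fin n) (Fin n) (ZMod 2)) x) '' S = T

/-!
A 1-saturating set spans the space, so it contains a basis, and up to projective equivalence this is
the standard one. If the set is a cap, it contains no sum of two basis vectors, and its five other
points are among 16 vectors. Otherwise it contains a line, two points of which may be taken as the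
first two basis vectors, and its four other points are among 25 vectors. Both families are small
enough to be searched by kernel evaluation, with vectors encoded as natural numbers; each minimal
1-saturating member is matched with a representative by searching for a linear map. The
representatives are told apart by the sum over their points of the cubes of the number of lines
contained in the set through the point.
-/

section ProjectiveEquivalence

variable {n : ℕ} {S T U : Set (Fin n → ZMod 2)}

theorem projEquiv_iff_exists_linearEquiv :
    ProjEquiv S T ↔ ∃ e : (Fin n → ZMod 2) ≃ₗ[ZMod 2] (Fin n → ZMod 2), e '' S = T := by
  constructor
  · rintro ⟨g, rfl⟩
    exact ⟨LinearMap.GeneralLinearGroup.generalLinearEquiv _ _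
      (Matrix.GeneralLinearGroup.toLin g), rfl⟩
  · rintro ⟨e, rfl⟩
    refine ⟨Matrix.GeneralLinearGroup.toLin.symm
      ((LinearMap.GeneralLinearGroup.generalLinearEquiv _ _).symm e), ?_⟩
    refine Set.image_congr fun x _ => ?_
    exact LinearMap.toMatrix'_mulVec (e : (Fin n → ZMod 2) →ₗ[ZMod 2] (Fin n → ZMod 2)) x

theorem projEquiv_image (e : (Fin n → ZMod 2) ≃ₗ[ZMod 2] (Fin n → ZMod 2)) :
    ProjEquiv S (e '' S) :=
  projEquiv_iff_exists_linearEquiv.2 ⟨e, rfl⟩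

theorem ProjEquiv.symm (h : ProjEquiv S T) : ProjEquiv T S := by
  obtain ⟨e, rfl⟩ := projEquiv_iff_exists_linearEquiv.1 h
  exact projEquiv_iff_exists_linearEquiv.2 ⟨e.symm, e.toEquiv.symm_image_image S⟩

theorem ProjEquiv.trans (hST : ProjEquiv S T) (hTU : ProjEquiv T U) : ProjEquiv S U := by
  obtain ⟨e, rfl⟩ := projEquiv_iff_exists_linearEquiv.1 hST
  obtain ⟨f, rfl⟩ := projEquiv_iff_exists_linearEquiv.1 hTU
  exact projEquiv_iff_exists_linearEquiv.2 ⟨e.trans f, Set.image_comp f e S⟩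

theorem ProjEquiv.ncard_eq (h : ProjEquiv S T) : S.ncard = T.ncard := by
  obtain ⟨e, rfl⟩ := projEquiv_iff_exists_linearEquiv.1 h
  exact (Set.ncard_image_of_injective S e.injective).symm

theorem projEquiv_of_subset_image {f : (Fin n → ZMod 2) →ₗ[ZMod 2] (Fin n → ZMod 2)}
    (hspan : Submodule.span (ZMod 2) T = ⊤) (hsub : T ⊆ f '' S) (hcard : S.ncard ≤ T.ncard) :
    ProjEquiv S T := by
  have himage : f '' S = T :=
    (Set.eq_of_subset_of_ncard_le hsub ((Set.ncard_image_le S.toFinite).trans hcard)).symm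
  have hsurj : Function.Surjective f := by
    rw [← LinearMap.range_eq_top, eq_top_iff, ← hspan, Submodule.span_le]
    exact hsub.trans (Set.image_subset_range f S)
  exact projEquiv_iff_exists_linearEquiv.2
    ⟨LinearEquiv.ofBijective f ⟨LinearMap.injective_iff_surjective.2 hsurj, hsurj⟩, himage⟩

end ProjectiveEquivalence

section Saturating

variable {n : ℕ} {S T : Set (Fin n → ZMod 2)}

theorem add_eq_zero_iff_eq_of_zmod_two {V : Type*} [AddCommGroup V] [Module (ZMod 2) V] {a b : V} :
    a + b = 0 ↔ a = b := by
  rw [add_eq_zero_iff_eq_neg, ZModModule.neg_eq_self]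

theorem saturating_iff_forall_exists_add :
    Saturating S ↔ 0 ∉ S ∧ ∀ x, ∃ a ∈ insert 0 S, ∃ b ∈ insert 0 S, a + b = x := by
  refine and_congr ⟨fun h h0 => h 0 h0 rfl, fun h s hs h0 => h (h0 ▸ hs)⟩
    ⟨fun h x => ?_, fun h x hx0 hxS => ?_⟩
  · by_cases hx : x ∈ insert 0 S
    · exact ⟨x, hx, 0, Set.mem_insert _ _, add_zero x⟩
    · rw [Set.mem_insert_iff, not_or] at hx
      obtain ⟨a, ha, b, hb, -, rfl⟩ := h x hx.1 hx.2
      exact ⟨a, .inr ha, b, .inr hb, rfl⟩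
  · obtain ⟨a, rfl | ha, b, rfl | hb, rfl⟩ := h x
    · simp at hx0
    · simp [hb] at hxS
    · simp [ha] at hxS
    · exact ⟨a, ha, b, hb, mt add_eq_zero_iff_eq_of_zmod_two.2 hx0, rfl⟩

theorem Saturating.span_eq_top (hS : Saturating S) : Submodule.span (ZMod 2) S = ⊤ := by
  refine eq_top_iff.2 fun x _ => ?_
  obtain ⟨a, ha, b, hb, rfl⟩ := (saturating_iff_forall_exists_add.1 hS).2 x
  rw [← Submodule.span_insert_zero]
  exact add_mem (Submodule.subset_span ha) (Submodule.subset_span hb)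

theorem Saturating.of_projEquiv (hS : Saturating S) (h : ProjEquiv S T) : Saturating T := by
  obtain ⟨e, rfl⟩ := projEquiv_iff_exists_linearEquiv.1 h
  rw [saturating_iff_forall_exists_add] at hS ⊢
  refine ⟨fun h0 => hS.1 (by simpa using h0), fun y => ?_⟩
  obtain ⟨a, ha, b, hb, hab⟩ := hS.2 (e.symm y)
  have hinsert : insert 0 (e '' S) = e '' insert 0 S := by rw [Set.image_insert_eq, map_zero]
  rw [hinsert]
  exact ⟨e a, Set.mem_image_of_mem e ha, e b, Set.mem_image_of_mem e hb,
    by rw [← map_add, hab, e.apply_symm_apply]⟩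

theorem MinSat.of_projEquiv (hS : MinSat S) (h : ProjEquiv S T) : MinSat T := by
  refine ⟨hS.1.of_projEquiv h, ?_⟩
  obtain ⟨e, rfl⟩ := projEquiv_iff_exists_linearEquiv.1 h
  rintro _ ⟨s, hs, rfl⟩ hsat
  rw [← Set.image_singleton, ← Set.image_sdiff e.injective] at hsat
  exact hS.2 s hs (hsat.of_projEquiv (projEquiv_image e).symm)

theorem isCap_iff_forall_add_notMem :
    IsCap S ↔ 0 ∉ S ∧ ∀ a ∈ S, ∀ b ∈ S, a + b ∉ S := by
  constructor
  · rintro ⟨hne, hcap⟩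
    have h0 : 0 ∉ S := fun h => hne 0 h rfl
    refine ⟨h0, fun a ha b hb hab => ?_⟩
    refine hcap a ha b hb (a + b) hab ?_ ?_ ?_ (ZModModule.add_self _)
    · exact mt add_eq_zero_iff_eq_of_zmod_two.2 (hne _ hab)
    · simpa using hne b hb
    · simpa using hne a ha
  · rintro ⟨h0, hcap⟩
    refine ⟨fun s hs hs0 => h0 (hs0 ▸ hs), fun a ha b hb c hc _ _ _ habc => hcap a ha b hb ?_⟩
    rwa [add_eq_zero_iff_eq_of_zmod_two.1 habc]

theorem IsCap.of_projEquiv (hS : IsCap S) (h : ProjEquiv S T) : IsCap T := by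
  obtain ⟨e, rfl⟩ := projEquiv_iff_exists_linearEquiv.1 h
  rw [isCap_iff_forall_add_notMem] at hS ⊢
  refine ⟨fun h0 => hS.1 (by simpa using h0), ?_⟩
  rintro _ ⟨a, ha, rfl⟩ _ ⟨b, hb, rfl⟩ hab
  rw [← map_add, e.injective.mem_set_image] at hab
  exact hS.2 a ha b hb hab

end Saturating

section LineMoment

variable {V W : Type*} [Add V] [Add W] {S : Set V}

/-- The number of `b ∈ S` with `a + b ∈ S`. In a binary projective space with `0 ∉ S` this is twice
the number of lines `{a, b, a + b}` contained in `S` through the point `a` of `S`. -/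
noncomputable def lineDegree (S : Set V) (a : V) : ℕ :=
  {b ∈ S | a + b ∈ S}.ncard

/-- The sum of the cubes of the line degrees, a projective invariant. The exponent is chosen so
that it separates the seven orbits; the sum of the squares does not. -/
noncomputable def lineMoment (S : Set V) : ℕ :=
  ∑ᶠ a ∈ S, lineDegree S a ^ 3

theorem lineDegree_image {F : Type*} [FunLike F V W] [AddHomClass F V W] (f : F)
    (hf : Function.Injective f) (a : V) : lineDegree (f '' S) (f a) = lineDegree S a := by
  have himage : {b ∈ f '' S | f a + b ∈ f '' S} = f '' {b ∈ S | a + b ∈ S} := by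
    ext y
    constructor
    · rintro ⟨⟨b, hb, rfl⟩, hab⟩
      rw [← map_add, hf.mem_set_image] at hab
      exact ⟨b, ⟨hb, hab⟩, rfl⟩
    · rintro ⟨b, ⟨hb, hab⟩, rfl⟩
      exact ⟨⟨b, hb, rfl⟩, a + b, hab, map_add f a b⟩
  rw [lineDegree, himage, Set.ncard_image_of_injective _ hf, lineDegree]

theorem lineMoment_image {F : Type*} [FunLike F V W] [AddHomClass F V W] (f : F)
    (hf : Function.Injective f) : lineMoment (f '' S) = lineMoment S := by
  simp_rw [lineMoment, finsum_mem_image hf.injOn, lineDegree_image f hf]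

theorem ProjEquiv.lineMoment_eq {n : ℕ} {S T : Set (Fin n → ZMod 2)} (h : ProjEquiv S T) :
    lineMoment S = lineMoment T := by
  obtain ⟨e, rfl⟩ := projEquiv_iff_exists_linearEquiv.1 h
  exact (lineMoment_image e e.injective).symm

theorem isCap_iff_lineMoment_eq_zero {n : ℕ} {S : Set (Fin n → ZMod 2)} (h0 : 0 ∉ S) :
    IsCap S ↔ lineMoment S = 0 := by
  rw [isCap_iff_forall_add_notMem, and_iff_right h0, lineMoment,
    finsum_mem_eq_finite_toFinset_sum _ S.toFinite, Finset.sum_eq_zero_iff]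
  refine forall_congr' fun a => ?_
  simp [lineDegree, Set.ncard_eq_zero (Set.toFinite _), Set.eq_empty_iff_forall_notMem]

end LineMoment

theorem exists_basis_mem_of_linearIndepOn {ι K V : Type*} [Fintype ι] [DivisionRing K]
    [AddCommGroup V] [Module K V] [FiniteDimensional K V] {S : Set V} {s : Set ι} {v : ι → V}
    (hcard : Fintype.card ι = Module.finrank K V) (hspan : Submodule.span K S = ⊤)
    (hv : LinearIndepOn K v s) (hvS : Set.MapsTo v s S) :
    ∃ b : Module.Basis ι K V, (∀ i, b i ∈ S) ∧ ∀ i ∈ s, b i = v i := by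
  let B := hv.id_image.extend hvS.image_subset
  let b : Module.Basis B K V := .extendLe hv.id_image hvS.image_subset hspan.ge
  have hb (x : B) : b x = x := Module.Basis.extendLe_apply_self ..
  have : Fintype B := FiniteDimensional.fintypeBasisIndex b
  have hcardB : Fintype.card ι = B.toFinset.card := by
    rw [hcard, Module.finrank_eq_card_basis b, Set.toFinset_card]
  have hvB : Set.MapsTo v s B.toFinset := fun i hi => by
    simpa using hv.id_image.subset_extend hvS.image_subset (Set.mem_image_of_mem v hi)
  obtain ⟨g, hg⟩ := hvB.exists_equiv_extend_of_card_eq hcardB hv.injOn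
  let g' : ι ≃ B := g.trans (Equiv.subtypeEquivRight fun _ => Set.mem_toFinset)
  have hg' (i : ι) : b.reindex g'.symm i = g i := by
    rw [Module.Basis.reindex_apply, hb]
    rfl
  refine ⟨b.reindex g'.symm, fun i => ?_, fun i hi => (hg' i).trans (hg i hi)⟩
  rw [hg']
  exact hv.id_image.extend_subset hvS.image_subset (g' i).2

theorem linearIndepOn_pair_of_zmod_two {ι V : Type*} [AddCommGroup V] [Module (ZMod 2) V]
    {v : ι → V} {i j : ι} (hij : i ≠ j) (hi : v i ≠ 0) (hj : v j ≠ 0) (hne : v i ≠ v j) :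
    LinearIndepOn (ZMod 2) v {i, j} := by
  rw [linearIndepOn_pair_iff v hij hi]
  intro c
  obtain rfl | rfl : c = 0 ∨ c = 1 := by revert c; decide
  · simpa using hj.symm
  · simpa using hne

section BinaryCodes

variable {n : ℕ}

/-- The vector over `ZMod 2` whose coordinates are the first `n` binary digits of `a`. -/
def binaryVec (n a : ℕ) : Fin n → ZMod 2 := fun i => if a.testBit i then 1 else 0

/-- The natural number whose binary digits are the coordinates of `x`, the inverse of `binaryVec` on
the numbers below `2 ^ n`. It turns addition of vectors into `^^^`. -/
def binaryCode (x : Fin n → ZMod 2) : ℕ := Nat.ofBits fun i => x i == 1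

/-- The vectors with codes in `l`: lists of codes stand for sets of points. -/
def pointSet (n : ℕ) (l : List ℕ) : Set (Fin n → ZMod 2) := {x | binaryCode x ∈ l}

theorem binaryVec_xor (a b : ℕ) : binaryVec n (a ^^^ b) = binaryVec n a + binaryVec n b := by
  funext i
  simp only [binaryVec, Nat.testBit_xor, Pi.add_apply]
  cases a.testBit i <;> cases b.testBit i <;> decide

theorem binaryCode_lt_two_pow (x : Fin n → ZMod 2) : binaryCode x < 2 ^ n :=
  Nat.ofBits_lt_two_pow _

theorem binaryVec_binaryCode (x : Fin n → ZMod 2) : binaryVec n (binaryCode x) = x := by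
  have h : ∀ c : ZMod 2, (if c == 1 then 1 else 0) = c := by decide
  funext i
  simp only [binaryVec, binaryCode, Nat.testBit_ofBits_lt _ _ i.isLt]
  exact h (x i)

theorem binaryCode_binaryVec {a : ℕ} (ha : a < 2 ^ n) : binaryCode (binaryVec n a) = a := by
  have h (i : Fin n) : (binaryVec n a i == 1) = a.testBit i := by
    cases hi : a.testBit i <;> simp [binaryVec, hi]
  simp only [binaryCode, h, Nat.ofBits_testBit, Nat.mod_eq_of_lt ha]

theorem binaryCode_injective : Function.Injective (binaryCode (n := n)) :=
  Function.LeftInverse.injective binaryVec_binaryCode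

theorem binaryCode_add (x y : Fin n → ZMod 2) :
    binaryCode (x + y) = binaryCode x ^^^ binaryCode y := by
  have hlt := Nat.xor_lt_two_pow (binaryCode_lt_two_pow x) (binaryCode_lt_two_pow y)
  rw [← binaryCode_binaryVec hlt, binaryVec_xor, binaryVec_binaryCode, binaryVec_binaryCode]

theorem binaryCode_zero : binaryCode (0 : Fin n → ZMod 2) = 0 := by
  rw [← add_zero (0 : Fin n → ZMod 2), binaryCode_add, Nat.xor_self]

theorem binaryVec_two_pow (i : Fin n) : binaryVec n (2 ^ (i : ℕ)) = Pi.single i 1 := by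
  funext j
  simp [binaryVec, Nat.testBit_two_pow, Pi.single_apply, Fin.ext_iff, eq_comm]

theorem exists_linearEquiv_binaryVec_two_pow_mem {S : Set (Fin n → ZMod 2)} {s : Set (Fin n)}
    {v : Fin n → Fin n → ZMod 2} (hspan : Submodule.span (ZMod 2) S = ⊤)
    (hv : LinearIndepOn (ZMod 2) v s) (hvS : Set.MapsTo v s S) :
    ∃ e : (Fin n → ZMod 2) ≃ₗ[ZMod 2] (Fin n → ZMod 2),
      (∀ i : Fin n, binaryVec n (2 ^ (i : ℕ)) ∈ e '' S) ∧
        ∀ i ∈ s, e (v i) = binaryVec n (2 ^ (i : ℕ)) := by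
  obtain ⟨b, hbS, hbv⟩ := exists_basis_mem_of_linearIndepOn (by simp) hspan hv hvS
  have hb (i : Fin n) : b.equivFun (b i) = binaryVec n (2 ^ (i : ℕ)) := by
    funext j
    rw [binaryVec_two_pow, Module.Basis.equivFun_self, Pi.single_apply]
    simp only [eq_comm]
  exact ⟨b.equivFun, fun i => ⟨b i, hbS i, hb i⟩, fun i hi => hbv i hi ▸ hb i⟩

theorem binaryVec_mem_pointSet {l : List ℕ} {a : ℕ} (ha : a < 2 ^ n) :
    binaryVec n a ∈ pointSet n l ↔ a ∈ l := by
  rw [pointSet, Set.mem_ofPred_eq, binaryCode_binaryVec ha]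

theorem pointSet_subset_of_forall_binaryVec_mem {l : List ℕ} {S : Set (Fin n → ZMod 2)}
    (h : ∀ a ∈ l, binaryVec n a ∈ S) : pointSet n l ⊆ S := fun x hx => by
  simpa only [binaryVec_binaryCode] using h _ hx

theorem pointSet_eq_image {l : List ℕ} (hl : ∀ a ∈ l, a < 2 ^ n) :
    pointSet n l = binaryVec n '' {a | a ∈ l} := by
  ext x
  constructor
  · exact fun hx => ⟨binaryCode x, hx, binaryVec_binaryCode x⟩
  · rintro ⟨a, ha, rfl⟩
    exact (binaryVec_mem_pointSet (hl a ha)).2 ha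

theorem injOn_binaryVec {l : List ℕ} (hl : ∀ a ∈ l, a < 2 ^ n) :
    Set.InjOn (binaryVec n) {a | a ∈ l} := fun a ha b hb hab => by
  rw [← binaryCode_binaryVec (hl a ha), hab, binaryCode_binaryVec (hl b hb)]

theorem ncard_pointSet {l : List ℕ} (hnodup : l.Nodup) (hl : ∀ a ∈ l, a < 2 ^ n) :
    (pointSet n l).ncard = l.length := by
  rw [pointSet_eq_image hl, (injOn_binaryVec hl).ncard_image, ← List.coe_toFinset,
    Set.ncard_coe_finset, List.toFinset_card_of_nodup hnodup]

theorem pointSet_sdiff_singleton (l : List ℕ) {a : ℕ} (ha : a < 2 ^ n) :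
    pointSet n l \ {binaryVec n a} = pointSet n (l.filter fun b => b != a) := by
  ext x
  have hx : x = binaryVec n a ↔ binaryCode x = a := by
    rw [← binaryCode_injective.eq_iff, binaryCode_binaryVec ha]
  simp [pointSet, hx]

theorem exists_sublist_pointSet_append_eq {S : Set (Fin n → ZMod 2)} {base cands : List ℕ}
    (hbase : pointSet n base ⊆ S) (hsub : S ⊆ pointSet n (cands ++ base)) :
    ∃ t, t.Sublist cands ∧ pointSet n (t ++ base) = S := by
  classical
  refine ⟨cands.filter (binaryVec n · ∈ S), List.filter_sublist, Set.Subset.antisymm ?_ ?_⟩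
  · intro x hx
    rcases List.mem_append.1 hx with hx | hx
    · simpa [binaryVec_binaryCode] using (List.mem_filter.1 hx).2
    · exact hbase hx
  · intro x hx
    have hcode := List.mem_append.1 (hsub hx)
    simpa [pointSet, binaryVec_binaryCode, hx] using hcode

end BinaryCodes

section ListCriteria

variable {n : ℕ} {l : List ℕ}

/-- The number whose binary digit at `a` is `1` exactly when `a ∈ l`. -/
def bitmask : List ℕ → ℕ
  | [] => 0
  | a :: l => bitmask l ||| 1 <<< a

/-- The bitmask of the sums of two codes in `0 :: l`. -/
def sumMask : List ℕ → ℕ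
  | [] => 1
  | a :: l => sumMask l ||| bitmask ((0 :: l).map (a ^^^ ·))

/-- Decides whether `pointSet n l` is 1-saturating, see `saturating_pointSet_iff`. -/
def isSaturating (n : ℕ) (l : List ℕ) : Bool := sumMask l % 2 ^ 2 ^ n == 2 ^ 2 ^ n - 1

/-- Decides whether `pointSet n l` is minimal 1-saturating, see `minSat_pointSet_iff`. -/
def isMinSat (n : ℕ) (l : List ℕ) : Bool :=
  isSaturating n l && l.all fun a => !isSaturating n (l.filter fun b => b != a)

/-- Computes `lineMoment (pointSet n l)`, see `lineMoment_pointSet`. -/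
def listLineMoment (l : List ℕ) : ℕ :=
  (l.map fun a => (l.countP fun b => (bitmask l).testBit (a ^^^ b)) ^ 3).sum

theorem testBit_bitmask (l : List ℕ) (a : ℕ) : (bitmask l).testBit a ↔ a ∈ l := by
  induction l with
  | nil => simp [bitmask]
  | cons b l ih =>
    simp [bitmask, ih, Nat.one_shiftLeft, Nat.testBit_two_pow, or_comm, eq_comm (a := a)]

theorem testBit_sumMask (l : List ℕ) (a : ℕ) :
    (sumMask l).testBit a ↔ ∃ b ∈ 0 :: l, ∃ c ∈ 0 :: l, b ^^^ c = a := by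
  induction l with
  | nil => simp [sumMask, Nat.testBit_one_eq_true_iff_self_eq_zero, eq_comm (a := a)]
  | cons d l ih =>
    have hmem {b : ℕ} : b ∈ 0 :: d :: l ↔ b = d ∨ b ∈ 0 :: l := by
      simp only [List.mem_cons, or_left_comm]
    rw [sumMask, Nat.testBit_or, Bool.or_eq_true, ih, testBit_bitmask, List.mem_map]
    constructor
    · rintro (⟨b, hb, c, hc, h⟩ | ⟨c, hc, h⟩)
      · exact ⟨b, hmem.2 (.inr hb), c, hmem.2 (.inr hc), h⟩
      · exact ⟨d, hmem.2 (.inl rfl), c, hmem.2 (.inr hc), h⟩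
    · rintro ⟨b, hb, c, hc, rfl⟩
      rw [hmem] at hb hc
      rcases hb with hb | hb <;> rcases hc with hc | hc
      · exact .inl ⟨0, List.mem_cons_self, 0, List.mem_cons_self, by simp [hb, hc]⟩
      · exact .inr ⟨c, hc, by rw [hb]⟩
      · exact .inr ⟨b, hb, by rw [hc, Nat.xor_comm]⟩
      · exact .inl ⟨b, hb, c, hc, rfl⟩

theorem isSaturating_iff :
    isSaturating n l ↔ ∀ a < 2 ^ n, ∃ b ∈ 0 :: l, ∃ c ∈ 0 :: l, b ^^^ c = a := by
  have hdigits : isSaturating n l ↔ ∀ a, (sumMask l % 2 ^ 2 ^ n).testBit a =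
      (2 ^ 2 ^ n - 1).testBit a := by
    rw [isSaturating, beq_iff_eq]
    exact ⟨fun h a => by rw [h], Nat.eq_of_testBit_eq⟩
  simp_rw [hdigits, Nat.testBit_mod_two_pow, Nat.testBit_two_pow_sub_one, Bool.and_eq_left_iff_imp,
    decide_eq_true_eq, testBit_sumMask]

theorem saturating_pointSet_iff (h0 : 0 ∉ l) (hl : ∀ a ∈ l, a < 2 ^ n) :
    Saturating (pointSet n l) ↔ isSaturating n l := by
  have hinsert : insert 0 (pointSet n l) = pointSet n (0 :: l) := by
    ext x
    simp [pointSet, ← binaryCode_injective.eq_iff (b := 0), binaryCode_zero]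
  have h0l : ∀ a ∈ 0 :: l, a < 2 ^ n := List.forall_mem_cons.2 ⟨Nat.two_pow_pos n, hl⟩
  rw [saturating_iff_forall_exists_add, isSaturating_iff, hinsert, and_iff_right]
  · constructor
    · intro h a ha
      obtain ⟨x, hx, y, hy, hxy⟩ := h (binaryVec n a)
      exact ⟨_, hx, _, hy, by rw [← binaryCode_add, hxy, binaryCode_binaryVec ha]⟩
    · intro h x
      obtain ⟨b, hb, c, hc, hbc⟩ := h _ (binaryCode_lt_two_pow x)
      exact ⟨_, (binaryVec_mem_pointSet (h0l b hb)).2 hb,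
        _, (binaryVec_mem_pointSet (h0l c hc)).2 hc,
        by rw [← binaryVec_xor, hbc, binaryVec_binaryCode]⟩
  · rwa [pointSet, Set.mem_ofPred_eq, binaryCode_zero]

theorem minSat_pointSet_iff (h0 : 0 ∉ l) (hl : ∀ a ∈ l, a < 2 ^ n) :
    MinSat (pointSet n l) ↔ isMinSat n l := by
  have hremove (a : ℕ) (ha : a ∈ l) :
      Saturating (pointSet n l \ {binaryVec n a}) ↔ isSaturating n (l.filter fun b => b != a) := by
    rw [pointSet_sdiff_singleton l (hl a ha)]
    exact saturating_pointSet_iff (fun h => h0 (List.mem_of_mem_filter h))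
      fun b hb => hl b (List.mem_of_mem_filter hb)
  rw [MinSat, saturating_pointSet_iff h0 hl, isMinSat, Bool.and_eq_true, List.all_eq_true]
  refine and_congr_right fun _ => ?_
  conv_lhs => rw [pointSet_eq_image hl, Set.forall_mem_image, ← pointSet_eq_image hl]
  refine forall₂_congr fun a ha => ?_
  rw [hremove a ha, Bool.not_eq_true, Bool.not_eq_true']

theorem lineDegree_pointSet (hnodup : l.Nodup) (hl : ∀ a ∈ l, a < 2 ^ n) {a : ℕ} (ha : a < 2 ^ n) :
    lineDegree (pointSet n l) (binaryVec n a) =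
      l.countP fun b => (bitmask l).testBit (a ^^^ b) := by
  have hfilter : {x ∈ pointSet n l | binaryVec n a + x ∈ pointSet n l} =
      pointSet n (l.filter fun b => (bitmask l).testBit (a ^^^ b)) := by
    ext x
    simp [pointSet, binaryCode_add, binaryCode_binaryVec ha, testBit_bitmask]
  rw [lineDegree, hfilter, ncard_pointSet (hnodup.filter _), List.countP_eq_length_filter]
  exact fun b hb => hl b (List.mem_of_mem_filter hb)

theorem lineMoment_pointSet (hnodup : l.Nodup) (hl : ∀ a ∈ l, a < 2 ^ n) :
    lineMoment (pointSet n l) = listLineMoment l := by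
  have hsum : lineMoment (pointSet n l) =
      ∑ a ∈ l.toFinset, lineDegree (pointSet n l) (binaryVec n a) ^ 3 := by
    conv_lhs => rw [lineMoment, pointSet_eq_image hl, finsum_mem_image (injOn_binaryVec hl),
      ← pointSet_eq_image hl, ← List.coe_toFinset, finsum_mem_coe_finset]
  rw [hsum, List.sum_toFinset _ hnodup, listLineMoment]
  exact congrArg List.sum
    (List.map_congr_left fun a ha => by rw [lineDegree_pointSet hnodup hl (hl a ha)])

end ListCriteria

section LinearImages

variable {n : ℕ}

/-- The sum of the codes `v` in the list whose place, counted from the end, is a binary digit `1`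
of `a`: the value at `a` of the linear map whose matrix has the columns `vs`, last column first. -/
def xorComb : List ℕ → ℕ → ℕ
  | [], _ => 0
  | v :: vs, a => if a.testBit vs.length then v ^^^ xorComb vs a else xorComb vs a

/-- Searches for a linear map taking the codes in the third argument bijectively to the digits of
the bitmask in the second. The columns `vs` of the map found so far determine the images of the
codes below `2 ^ vs.length`; a new column, chosen in `l`, is added when `2 ^ vs.length` occurs. -/
def hasLinearImage (l : List ℕ) : List ℕ → ℕ → List ℕ → Bool
  | _, m, [] => m == 0
  | vs, m, a :: A =>
    if a < 2 ^ vs.length then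
      m.testBit (xorComb vs a) && hasLinearImage l vs (m ^^^ 1 <<< xorComb vs a) A
    else
      a == 2 ^ vs.length &&
        l.any fun v => m.testBit v && hasLinearImage l (v :: vs) (m ^^^ 1 <<< v) A

theorem xorComb_xor (vs : List ℕ) (a b : ℕ) :
    xorComb vs (a ^^^ b) = xorComb vs a ^^^ xorComb vs b := by
  induction vs with
  | nil => simp [xorComb]
  | cons v vs ih =>
    simp only [xorComb, Nat.testBit_xor, ih]
    cases a.testBit vs.length <;> cases b.testBit vs.length <;>
      simp [Nat.xor_assoc, Nat.xor_left_comm v]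

theorem xorComb_append_of_lt (us : List ℕ) {vs : List ℕ} {a : ℕ} (ha : a < 2 ^ vs.length) :
    xorComb (us ++ vs) a = xorComb vs a := by
  induction us with
  | nil => rfl
  | cons u us ih =>
    have hlt : a < 2 ^ (us ++ vs).length :=
      ha.trans_le (Nat.pow_le_pow_right Nat.two_pos (by simp))
    rw [List.cons_append, xorComb, Nat.testBit_lt_two_pow hlt, if_neg Bool.false_ne_true, ih]

theorem xorComb_two_pow_of_length_le {vs : List ℕ} {k : ℕ} (hk : vs.length ≤ k) :
    xorComb vs (2 ^ k) = 0 := by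
  induction vs with
  | nil => rfl
  | cons v vs ih =>
    have hvs : vs.length < k := hk
    simp [xorComb, hvs.ne', ih hvs.le]

theorem xorComb_append_cons_two_pow (us : List ℕ) (v : ℕ) (vs : List ℕ) :
    xorComb (us ++ v :: vs) (2 ^ vs.length) = v := by
  rw [xorComb_append_of_lt us (by simp [Nat.pow_lt_pow_succ]), xorComb,
    xorComb_two_pow_of_length_le le_rfl]
  simp

theorem testBit_xor_one_shiftLeft_of_ne {m b c : ℕ} (hbc : b ≠ c) :
    (m ^^^ 1 <<< c).testBit b = m.testBit b := by
  simp [Nat.one_shiftLeft, hbc.symm]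

theorem exists_xorComb_eq_of_hasLinearImage {l vs A : List ℕ} {m : ℕ}
    (h : hasLinearImage l vs m A) :
    ∃ us, ∀ b, m.testBit b → ∃ a ∈ A, xorComb (us ++ vs) a = b := by
  induction A generalizing vs m with
  | nil =>
    have hm : m = 0 := by simpa [hasLinearImage] using h
    exact ⟨[], by simp [hm]⟩
  | cons a A ih =>
    have hcons {c : ℕ} {ws : List ℕ} (hc : xorComb ws a = c)
        (hA : ∀ b, (m ^^^ 1 <<< c).testBit b → ∃ a ∈ A, xorComb ws a = b) :
        ∀ b, m.testBit b → ∃ a' ∈ a :: A, xorComb ws a' = b := fun b hb => by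
      by_cases hbc : b = c
      · exact ⟨a, by simp, hc.trans hbc.symm⟩
      · obtain ⟨a', ha', hab⟩ := hA b (by rwa [testBit_xor_one_shiftLeft_of_ne hbc])
        exact ⟨a', by simp [ha'], hab⟩
    rw [hasLinearImage] at h
    split_ifs at h with ha
    · obtain ⟨us, hus⟩ := ih (Bool.and_eq_true_iff.1 h).2
      exact ⟨us, hcons (xorComb_append_of_lt us ha) hus⟩
    · simp only [Bool.and_eq_true, beq_iff_eq, List.any_eq_true] at h
      obtain ⟨rfl, v, -, -, hv⟩ := h
      obtain ⟨us, hus⟩ := ih hv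
      refine ⟨us ++ [v], ?_⟩
      rw [List.append_assoc, List.singleton_append]
      exact hcons (xorComb_append_cons_two_pow us v vs) hus

/-- The linear map computed on codes by `xorComb vs`. -/
def xorCombLinearMap (n : ℕ) (vs : List ℕ) : (Fin n → ZMod 2) →ₗ[ZMod 2] (Fin n → ZMod 2) :=
  AddMonoidHom.toZModLinearMap 2 <|
    AddMonoidHom.mk' (fun x => binaryVec n (xorComb vs (binaryCode x))) fun x y => by
      rw [binaryCode_add, xorComb_xor, binaryVec_xor]

theorem projEquiv_of_hasLinearImage {l A : List ℕ} (hA : ∀ a ∈ A, a < 2 ^ n)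
    (hspan : Submodule.span (ZMod 2) (pointSet n l) = ⊤)
    (hcard : (pointSet n A).ncard ≤ (pointSet n l).ncard)
    (h : hasLinearImage l [] (bitmask l) A) : ProjEquiv (pointSet n A) (pointSet n l) := by
  obtain ⟨vs, hvs⟩ := exists_xorComb_eq_of_hasLinearImage h
  rw [List.append_nil] at hvs
  refine projEquiv_of_subset_image (f := xorCombLinearMap n vs) hspan (fun x hx => ?_) hcard
  obtain ⟨a, ha, hax⟩ := hvs _ ((testBit_bitmask l (binaryCode x)).2 hx)
  refine ⟨binaryVec n a, (binaryVec_mem_pointSet (hA a ha)).2 ha, ?_⟩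
  change binaryVec n (xorComb _ (binaryCode (binaryVec n a))) = x
  rw [binaryCode_binaryVec (hA a ha), hax, binaryVec_binaryCode]

end LinearImages

section Classification

variable {S : Set (Fin 5 → ZMod 2)}

/-- Codes of representatives of the seven orbits; the first one is the cap. -/
def orbitRep : Fin 7 → List ℕ := ![
  [1, 2, 4, 7, 8, 13, 16, 21, 27, 30],
  [1, 2, 3, 4, 7, 8, 14, 16, 21, 27],
  [1, 2, 3, 4, 7, 8, 12, 16, 25, 30],
  [1, 2, 3, 4, 7, 8, 13, 14, 16, 24],
  [1, 2, 3, 4, 8, 15, 16, 22, 25, 28],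
  [1, 2, 3, 4, 7, 8, 11, 16, 29, 30],
  [1, 2, 3, 4, 5, 6, 7, 8, 16, 24]]

/-- Decides that `pointSet 5 l`, if minimal 1-saturating, lies in one of the seven orbits. Comparing
the line moments first only serves to avoid hopeless searches. -/
def isClassified (l : List ℕ) : Bool :=
  !isMinSat 5 l || (List.finRange 7).any fun i =>
    listLineMoment l == listLineMoment (orbitRep i) && hasLinearImage l [] (bitmask l) (orbitRep i)

theorem orbitRep_lt_two_pow : ∀ i, ∀ a ∈ orbitRep i, a < 2 ^ 5 := by decide

theorem zero_notMem_orbitRep : ∀ i, 0 ∉ orbitRep i := by decide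

theorem nodup_orbitRep : ∀ i, (orbitRep i).Nodup := by decide

theorem ncard_pointSet_orbitRep (i : Fin 7) : (pointSet 5 (orbitRep i)).ncard = 10 := by
  rw [ncard_pointSet (nodup_orbitRep i) (orbitRep_lt_two_pow i)]
  revert i
  decide

theorem minSat_pointSet_orbitRep (i : Fin 7) : MinSat (pointSet 5 (orbitRep i)) := by
  rw [minSat_pointSet_iff (zero_notMem_orbitRep i) (orbitRep_lt_two_pow i)]
  revert i
  decide +kernel

theorem lineMoment_pointSet_orbitRep (i : Fin 7) :
    lineMoment (pointSet 5 (orbitRep i)) = ![0, 120, 240, 288, 48, 576, 1536] i := by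
  rw [lineMoment_pointSet (nodup_orbitRep i) (orbitRep_lt_two_pow i)]
  revert i
  decide +kernel

theorem not_projEquiv_pointSet_orbitRep {i j : Fin 7} (hij : i ≠ j) :
    ¬ ProjEquiv (pointSet 5 (orbitRep i)) (pointSet 5 (orbitRep j)) := fun h => by
  have hmoment := h.lineMoment_eq
  rw [lineMoment_pointSet_orbitRep, lineMoment_pointSet_orbitRep] at hmoment
  have hinj : Function.Injective ![0, 120, 240, 288, 48, 576, 1536] := by decide
  exact hij (hinj hmoment)

theorem isCap_pointSet_orbitRep_iff (i : Fin 7) : IsCap (pointSet 5 (orbitRep i)) ↔ i = 0 := by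
  have h0 : 0 ∉ pointSet 5 (orbitRep i) := fun h => (minSat_pointSet_orbitRep i).1.1 0 h rfl
  rw [isCap_iff_lineMoment_eq_zero h0, lineMoment_pointSet_orbitRep]
  clear h0
  revert i
  decide

theorem exists_projEquiv_of_isClassified {l : List ℕ} (hnodup : l.Nodup) (h0 : 0 ∉ l)
    (hl : ∀ a ∈ l, a < 2 ^ 5) (hlen : l.length = 10) (hmin : MinSat (pointSet 5 l))
    (h : isClassified l) : ∃ i, ProjEquiv (pointSet 5 l) (pointSet 5 (orbitRep i)) := by
  rw [isClassified, (minSat_pointSet_iff h0 hl).1 hmin, Bool.not_true, Bool.false_or,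
    List.any_eq_true] at h
  obtain ⟨i, -, hi⟩ := h
  refine ⟨i, (projEquiv_of_hasLinearImage (orbitRep_lt_two_pow i) hmin.1.span_eq_top ?_
    (Bool.and_eq_true_iff.1 hi).2).symm⟩
  rw [ncard_pointSet_orbitRep, ncard_pointSet hnodup hl, hlen]

theorem exists_projEquiv_of_forall_isClassified {base cands : List ℕ} {k : ℕ}
    (hcheck : ∀ t ∈ cands.sublistsLen k, isClassified (t ++ base))
    (hlen : k + base.length = 10) (hnodup : (cands ++ base).Nodup)
    (hlt : ∀ a ∈ cands ++ base, a < 2 ^ 5) (hS : MinSat S) (hcard : S.ncard = 10)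
    (hbase : pointSet 5 base ⊆ S) (hsub : S ⊆ pointSet 5 (cands ++ base)) :
    ∃ i, ProjEquiv S (pointSet 5 (orbitRep i)) := by
  obtain ⟨t, ht, rfl⟩ := exists_sublist_pointSet_append_eq hbase hsub
  have hle := ht.append_right base
  have hlt' : ∀ a ∈ t ++ base, a < 2 ^ 5 := fun a ha => hlt a (hle.subset ha)
  have hlen' : (t ++ base).length = 10 := by
    rw [← ncard_pointSet (hnodup.sublist hle) hlt', hcard]
  have h0 : 0 ∉ t ++ base := fun h =>
    hS.1.1 0 (by rwa [pointSet, Set.mem_ofPred_eq, binaryCode_zero]) rfl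
  refine exists_projEquiv_of_isClassified (hnodup.sublist hle) h0 hlt' hlen' hS
    (hcheck t (List.mem_sublistsLen.2 ⟨ht, ?_⟩))
  rw [List.length_append] at hlen'
  omega

/-- The codes of the standard basis. -/
def capBase : List ℕ := [16, 8, 4, 2, 1]

/-- The codes of the vectors that are neither in the standard basis nor a sum of two of its members:
the points that can extend it to a cap. -/
def capCandidates : List ℕ := [31, 30, 29, 28, 27, 26, 25, 23, 22, 21, 19, 15, 14, 13, 11, 7]

/-- The codes of the standard basis and of the third point on the line through its first two
members. -/
def lineBase : List ℕ := [16, 8, 4, 3, 2, 1]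

/-- The codes of the nonzero vectors not listed in `lineBase`. -/
def lineCandidates : List ℕ :=
  [31, 30, 29, 28, 27, 26, 25, 24, 23, 22, 21, 20, 19, 18, 17, 15, 14, 13, 12, 11, 10, 9, 7, 6, 5]

theorem mem_capCandidates_append_or_exists_xor_eq : ∀ c < 2 ^ 5,
    c ∈ capCandidates ++ capBase ∨ ∃ a ∈ capBase, ∃ b ∈ capBase, a ^^^ b = c := by decide

theorem mem_lineCandidates_append : ∀ c < 2 ^ 5, c ≠ 0 → c ∈ lineCandidates ++ lineBase := by
  decide

set_option maxRecDepth 10000 in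
theorem isClassified_append_capBase :
    ∀ t ∈ capCandidates.sublistsLen 5, isClassified (t ++ capBase) := by
  decide +kernel

set_option maxRecDepth 10000 in
theorem isClassified_append_lineBase :
    ∀ t ∈ lineCandidates.sublistsLen 4, isClassified (t ++ lineBase) := by
  decide +kernel

theorem MinSat.exists_projEquiv_of_isCap (hS : MinSat S) (hcard : S.ncard = 10) (hcap : IsCap S) :
    ∃ i, ProjEquiv S (pointSet 5 (orbitRep i)) := by
  obtain ⟨e, he, -⟩ := exists_linearEquiv_binaryVec_two_pow_mem hS.1.span_eq_top
    (linearIndepOn_empty _ 0) (Set.mapsTo_empty _ _)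
  have hT := projEquiv_image (S := S) e
  have hbase : ∀ a ∈ capBase, binaryVec 5 a ∈ e '' S := by
    simp only [capBase, List.forall_mem_cons]
    exact ⟨he 4, he 3, he 2, he 1, he 0, List.forall_mem_nil _⟩
  have hsub : e '' S ⊆ pointSet 5 (capCandidates ++ capBase) := fun x hx => by
    refine (mem_capCandidates_append_or_exists_xor_eq _ (binaryCode_lt_two_pow x)).resolve_right ?_
    rintro ⟨a, ha, b, hb, hab⟩
    refine (isCap_iff_forall_add_notMem.1 (hcap.of_projEquiv hT)).2 _ (hbase a ha) _ (hbase b hb) ?_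
    rwa [← binaryVec_xor, hab, binaryVec_binaryCode]
  obtain ⟨i, hi⟩ := exists_projEquiv_of_forall_isClassified isClassified_append_capBase
    rfl (by decide) (by decide) (hS.of_projEquiv hT) (hT.ncard_eq ▸ hcard)
    (pointSet_subset_of_forall_binaryVec_mem hbase) hsub
  exact ⟨i, hT.trans hi⟩

theorem MinSat.exists_projEquiv_of_not_isCap (hS : MinSat S) (hcard : S.ncard = 10)
    (hcap : ¬ IsCap S) : ∃ i, ProjEquiv S (pointSet 5 (orbitRep i)) := by
  have h0 : 0 ∉ S := (saturating_iff_forall_exists_add.1 hS.1).1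
  obtain ⟨a, ha, b, hb, hab⟩ : ∃ a ∈ S, ∃ b ∈ S, a + b ∈ S := by
    simpa [isCap_iff_forall_add_notMem, h0] using hcap
  have hind : LinearIndepOn (ZMod 2) ![a, b, 0, 0, 0] {0, 1} :=
    linearIndepOn_pair_of_zmod_two (by decide) (hS.1.1 a ha) (hS.1.1 b hb)
      fun h => h0 (add_eq_zero_iff_eq_of_zmod_two.2 h ▸ hab)
  obtain ⟨e, he, hline⟩ := exists_linearEquiv_binaryVec_two_pow_mem hS.1.span_eq_top hind
    (by simp [Set.MapsTo, ha, hb])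
  have hT := projEquiv_image (S := S) e
  have h3 : binaryVec 5 3 ∈ e '' S :=
    ⟨a + b, hab, (map_add e a b).trans <|
      (congrArg₂ (· + ·) (hline 0 (by simp)) (hline 1 (by simp))).trans (binaryVec_xor 1 2).symm⟩
  have hbase : ∀ a ∈ lineBase, binaryVec 5 a ∈ e '' S := by
    simp only [lineBase, List.forall_mem_cons]
    exact ⟨he 4, he 3, he 2, h3, he 1, he 0, List.forall_mem_nil _⟩
  have hsub : e '' S ⊆ pointSet 5 (lineCandidates ++ lineBase) := fun x hx =>
    mem_lineCandidates_append _ (binaryCode_lt_two_pow x) fun hx0 =>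
      (hS.of_projEquiv hT).1.1 x hx (binaryCode_injective (hx0.trans binaryCode_zero.symm))
  obtain ⟨i, hi⟩ := exists_projEquiv_of_forall_isClassified isClassified_append_lineBase
    rfl (by decide) (by decide) (hS.of_projEquiv hT) (hT.ncard_eq ▸ hcard)
    (pointSet_subset_of_forall_binaryVec_mem hbase) hsub
  exact ⟨i, hT.trans hi⟩

end Classification

/-- Up to projective equivalence there are exactly seven minimal 1-saturating sets of
size 10 in PG(4,2); exactly one of them is a (complete) cap and exactly six are not caps. -/
theorem minSat_PG4_size10_seven_orbits :
    ∃ A : Fin 7 → Set (Fin 5 → ZMod 2),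
      (∀ i, MinSat (A i) ∧ (A i).ncard = 10) ∧
      (∀ i j, i ≠ j → ¬ ProjEquiv (A i) (A j)) ∧
      (∀ S : Set (Fin 5 → ZMod 2), MinSat S → S.ncard = 10 → ∃ i, ProjEquiv S (A i)) ∧
      (∃! i, IsCap (A i)) := by
  refine ⟨fun i => pointSet 5 (orbitRep i),
    fun i => ⟨minSat_pointSet_orbitRep i, ncard_pointSet_orbitRep i⟩,
    fun i j hij => not_projEquiv_pointSet_orbitRep hij, fun S hS hcard => ?_,
    0, (isCap_pointSet_orbitRep_iff 0).2 rfl, fun i => (isCap_pointSet_orbitRep_iff i).1⟩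
  by_cases hcap : IsCap S
  · exact hS.exists_projEquiv_of_isCap hcard hcap
  · exact hS.exists_projEquiv_of_not_isCap hcard hcap
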